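/- Let G be a finite simple graph and let H = K_1 + G be the join of a single new vertex with G. If H is not graceful, then G is not supergraceful. -/

import Mathlib

/-- The induced edge label `|φ(u) − φ(v)|` of an edge, as a function on `Sym2 V`. -/
def edgeLabel {V : Type*} (φ : V → ℕ) : Sym2 V → ℕ :=
  Sym2.lift ⟨fun u v => Nat.dist (φ u) (φ v), fun u v => Nat.dist_comm (φ u) (φ v)⟩

/-- `φ` is a graceful labeling of the graph `G` with `q` edges: it is injective,
takes values in `{0, 1, ..., q}`, and the induced edge labels `|φ(u) − φ(v)|`
form exactly the set `{1, 2, ..., q}`, each value occurring once. -/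
def IsGracefulLabeling {V : Type*} (G : SimpleGraph V) (φ : V → ℕ) : Prop :=
  Function.Injective φ ∧
  (∀ v, φ v ≤ Nat.card G.edgeSet) ∧
  Set.InjOn (edgeLabel φ) G.edgeSet ∧
  edgeLabel φ '' G.edgeSet = Set.Icc 1 (Nat.card G.edgeSet)

/-- A graph is graceful if it admits a graceful labeling. -/
def IsGraceful {V : Type*} (G : SimpleGraph V) : Prop :=
  ∃ φ : V → ℕ, IsGracefulLabeling G φ

/-- `φ` is a total labeling of the graph `G` with `p` vertices and `q` edges:
it is injective, the induced edge labels are pairwise distinct, no value is both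
a vertex label and an edge label, and the vertex labels together with the edge
labels form exactly the set `{1, 2, ..., p+q}`. -/
def IsTotalLabeling {V : Type*} (G : SimpleGraph V) (φ : V → ℕ) : Prop :=
  Function.Injective φ ∧
  Set.InjOn (edgeLabel φ) G.edgeSet ∧
  Disjoint (Set.range φ) (edgeLabel φ '' G.edgeSet) ∧
  Set.range φ ∪ edgeLabel φ '' G.edgeSet = Set.Icc 1 (Nat.card V + Nat.card G.edgeSet)

/-- A graph is supergraceful if it admits a total labeling. -/
def IsSupergraceful {V : Type*} (G : SimpleGraph V) : Prop :=
  ∃ φ : V → ℕ, IsTotalLabeling G φ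

/-- The join `K₁ + G`: a new vertex `none` adjacent to every vertex of `G`,
with `G` itself on the `some` vertices. -/
def addApex {V : Type*} (G : SimpleGraph V) : SimpleGraph (Option V) :=
  SimpleGraph.fromRel (fun x y =>
    x = none ∨ ∃ u v, x = some u ∧ y = some v ∧ G.Adj u v)

/-!
Give the new vertex of `K₁ + G` the label `0` and keep a total labeling of `G` on the other
vertices. Each new edge then inherits the label of its endpoint in `G`, so the edge labels of
`K₁ + G` are exactly the vertex labels and edge labels of `G` taken together, namely
`1, ..., p + q`, and `p + q` is the number of edges of `K₁ + G`.
-/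

theorem edgeLabel_map {V W : Type*} (φ : W → ℕ) (f : V → W) (e : Sym2 V) :
    edgeLabel φ (e.map f) = edgeLabel (φ ∘ f) e := by
  induction e using Sym2.ind with
  | _ u v => rfl

section Apex

variable {V : Type*}

@[simp]
theorem addApex_adj_none_some (G : SimpleGraph V) (v : V) : (addApex G).Adj none (some v) := by
  simp [addApex]

@[simp]
theorem addApex_adj_some_some {G : SimpleGraph V} {u v : V} :
    (addApex G).Adj (some u) (some v) ↔ G.Adj u v := by
  simpa [addApex, G.adj_comm v u] using G.ne_of_adj

theorem edgeSet_addApex (G : SimpleGraph V) :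
    (addApex G).edgeSet =
      Set.range (fun v : V => s(none, some v)) ∪ Sym2.map some '' G.edgeSet := by
  ext e
  induction e using Sym2.ind with
  | _ x y =>
    rcases x with _ | u <;> rcases y with _ | v
    · simp [Sym2.exists]
    · simp [Sym2.exists]
    · simp [(addApex_adj_none_some G u).symm]
    · rw [SimpleGraph.mem_edgeSet, addApex_adj_some_some, ← SimpleGraph.mem_edgeSet,
        ← (Sym2.map.injective (Option.some_injective V)).mem_set_image]
      simp

/-- The extension of a vertex labeling `φ` of `G` to `K₁ + G` giving the new vertex the label
`0`, so that the edge joining it to a vertex `v` is labeled `φ v`. -/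
def apexLabeling (φ : V → ℕ) : Option V → ℕ :=
  fun x => x.elim 0 φ

theorem apexLabeling_injective {φ : V → ℕ} (hφ : Function.Injective φ) (h0 : ∀ v, φ v ≠ 0) :
    Function.Injective (apexLabeling φ) := by
  rintro (_ | u) (_ | v) h
  · rfl
  · exact absurd h.symm (h0 v)
  · exact absurd h (h0 u)
  · exact congrArg some (hφ h)

theorem edgeLabel_apexLabeling_none_some (φ : V → ℕ) (v : V) :
    edgeLabel (apexLabeling φ) s(none, some v) = φ v :=
  Nat.dist_zero_left (φ v)

theorem edgeLabel_apexLabeling_map_some (φ : V → ℕ) (e : Sym2 V) :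
    edgeLabel (apexLabeling φ) (e.map some) = edgeLabel φ e :=
  edgeLabel_map (apexLabeling φ) some e

theorem image_edgeLabel_apexLabeling (G : SimpleGraph V) (φ : V → ℕ) :
    edgeLabel (apexLabeling φ) '' (addApex G).edgeSet =
      Set.range φ ∪ edgeLabel φ '' G.edgeSet := by
  simp only [edgeSet_addApex, Set.image_union, ← Set.range_comp, Set.image_image,
    Function.comp_def, edgeLabel_apexLabeling_none_some, edgeLabel_apexLabeling_map_some]

theorem injOn_edgeLabel_apexLabeling {G : SimpleGraph V} {φ : V → ℕ}
    (hφ : Function.Injective φ) (hE : Set.InjOn (edgeLabel φ) G.edgeSet)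
    (hdisj : Disjoint (Set.range φ) (edgeLabel φ '' G.edgeSet)) :
    Set.InjOn (edgeLabel (apexLabeling φ)) (addApex G).edgeSet := by
  rw [edgeSet_addApex]
  rintro _ (⟨u, rfl⟩ | ⟨e, he, rfl⟩) _ (⟨v, rfl⟩ | ⟨f, hf, rfl⟩) h <;>
    simp only [edgeLabel_apexLabeling_none_some, edgeLabel_apexLabeling_map_some] at h
  · rw [hφ h]
  · exact (hdisj.ne_of_mem ⟨u, rfl⟩ ⟨f, hf, rfl⟩ h).elim
  · exact (hdisj.ne_of_mem ⟨v, rfl⟩ ⟨e, he, rfl⟩ h.symm).elim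
  · rw [hE he hf h]

theorem IsTotalLabeling.isGracefulLabeling_apexLabeling {G : SimpleGraph V} {φ : V → ℕ}
    (h : IsTotalLabeling G φ) : IsGracefulLabeling (addApex G) (apexLabeling φ) := by
  obtain ⟨hφ, hE, hdisj, hlabels⟩ := h
  have hmem (v : V) : φ v ∈ Set.Icc 1 (Nat.card V + Nat.card G.edgeSet) :=
    hlabels ▸ Or.inl ⟨v, rfl⟩
  have hinj := injOn_edgeLabel_apexLabeling hφ hE hdisj
  have himage := (image_edgeLabel_apexLabeling G φ).trans hlabels
  have hcard : Nat.card (addApex G).edgeSet = Nat.card V + Nat.card G.edgeSet := by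
    rw [← Nat.card_image_of_injOn hinj, himage]
    simp
  rw [← hcard] at hmem himage
  refine ⟨apexLabeling_injective hφ fun v => Nat.one_le_iff_ne_zero.mp (hmem v).1, ?_,
    hinj, himage⟩
  rintro (_ | v)
  · exact Nat.zero_le _
  · exact (hmem v).2

theorem IsSupergraceful.isGraceful_addApex {G : SimpleGraph V} (h : IsSupergraceful G) :
    IsGraceful (addApex G) :=
  h.imp' apexLabeling fun _ => IsTotalLabeling.isGracefulLabeling_apexLabeling

end Apex

/-- If the join `K₁ + G` is not graceful, then `G` is not supergraceful. -/
theorem not_supergraceful_of_join_not_graceful {V : Type*} [Fintype V]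
    (G : SimpleGraph V) (h : ¬ IsGraceful (addApex G)) :
    ¬ IsSupergraceful G :=
  mt IsSupergraceful.isGraceful_addApex h
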